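/- arXiv:1806.05159 — 3 statements merged into one kernel-verified Lean document; each statement's English description precedes it below -/
import Mathlib

section
/- There exists a universal constant c > 0 with the following property. Let h, m be positive integers, K, L > 0, let x_1, …, x_m be points of a set X, and let g : ℝ^h × X → ℝ be such that (i) |g(w, x_i) − g(w′, x_i)| ≤ L‖w − w′‖₂ for all i ∈ {1,…,m} and all w, w′ in the closed Euclidean ball B_K = {w ∈ ℝ^h : ‖w‖₂ ≤ K}, and (ii) α := sup_{w ∈ B_K, i ∈ {1,…,m}} |g(w, x_i)| is finite and positive. If K·L·√m ≥ e·α·√h, then the empirical Rademacher complexity of the class 𝒢 = { x ↦ g(w, x) : w ∈ B_K } on the sample x_1, …, x_m satisfies ℛ_m(𝒢) ≤ c · α · √( h · log( K·L·√m / (α·√h) ) ) / √m. -/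
noncomputable section

/-!
A single-scale covering argument suffices. Put `T = K L √m / (α √h) ≥ e` and `δ = K / T`, so that
`L δ = α √h / √m`. By comparing volumes, a maximal `δ`-separated subset `N` of the ball is a
`δ`-net with at most `(2 T + 1) ^ h` points (`exists_net`). By the Lipschitz assumption,
replacing `w` by a nearby point of `N` changes the signed average by at most `L δ`. Over the finite
set `N`, Massart's argument applies: the signed sums are sub-Gaussian (`sum_exp_signed_le`,
from `cosh t ≤ exp (t² / 2)`), so the average maximum is at most a constant times
`α √(log (2 |N|) / m)`. Both contributions are `O(α √(h log T) / √m)` because `T ≥ e`.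

The maximum over `N` is linearized by `t + 1 ≤ exp t` applied to `t = Λ |S| - P`, where `exp P` bounds
the total exponential moment; this replaces Jensen's inequality.
-/

open Metric in
/-- Volumetric bound: disjoint balls of radius `δ / 2` around the points all lie in the ball of
radius `K + δ / 2`. -/
lemma card_separated_le {h : ℕ} {K δ : ℝ} (hK : 0 < K) (hδ : 0 < δ)
    (s : Finset (EuclideanSpace ℝ (Fin h))) (hs : ∀ c ∈ s, ‖c‖ ≤ K)
    (hsep : ∀ c ∈ s, ∀ d ∈ s, c ≠ d → δ ≤ ‖c - d‖) :
    (s.card : ℝ) ≤ (2 * (K / δ) + 1) ^ h := by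
  let μ : MeasureTheory.Measure (EuclideanSpace ℝ (Fin h)) := MeasureTheory.volume
  have hd2 : 0 < δ / 2 := by positivity
  have hr : 0 < K + δ / 2 := by positivity
  have D : (s : Set (EuclideanSpace ℝ (Fin h))).PairwiseDisjoint fun c => ball c (δ / 2) := by
    rintro c hc d hd hcd
    apply ball_disjoint_ball
    rw [dist_eq_norm]
    linarith [hsep c hc d hd hcd]
  have hsub : (⋃ c ∈ s, ball c (δ / 2)) ⊆ ball (0 : EuclideanSpace ℝ (Fin h)) (K + δ / 2) := by
    refine Set.iUnion₂_subset fun x hx => ball_subset_ball' ?_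
    rw [dist_zero_right]
    linarith [hs x hx]
  have I : (s.card : ENNReal) * ENNReal.ofReal ((δ / 2) ^ h) * μ (ball 0 1) ≤
      ENNReal.ofReal ((K + δ / 2) ^ h) * μ (ball 0 1) := by
    have h1 := MeasureTheory.measure_mono (μ := μ) hsub
    rw [MeasureTheory.measure_biUnion_finset D fun c _ => measurableSet_ball] at h1
    simpa only [μ.addHaar_ball_of_pos _ hd2, μ.addHaar_ball_of_pos _ hr, Finset.sum_const,
      nsmul_eq_mul, mul_assoc, finrank_euclideanSpace_fin] using h1
  have J := (ENNReal.mul_le_mul_iff_left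
    (measure_ball_pos μ _ zero_lt_one).ne' MeasureTheory.measure_ball_lt_top.ne).1 I
  have J2 := ENNReal.toReal_le_of_le_ofReal (pow_nonneg hr.le _) J
  rw [ENNReal.toReal_mul, ENNReal.toReal_natCast, ENNReal.toReal_ofReal (by positivity)] at J2
  have e : 2 * (K / δ) + 1 = (K + δ / 2) / (δ / 2) := by field_simp
  rw [e, div_pow, le_div_iff₀ (by positivity)]
  exact J2

lemma exists_net {h : ℕ} {K δ : ℝ} (hK : 0 < K) (hδ : 0 < δ) :
    ∃ s : Finset (EuclideanSpace ℝ (Fin h)), (∀ c ∈ s, ‖c‖ ≤ K) ∧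
      (s.card : ℝ) ≤ (2 * (K / δ) + 1) ^ h ∧
      ∀ w : EuclideanSpace ℝ (Fin h), ‖w‖ ≤ K → ∃ c ∈ s, ‖w - c‖ ≤ δ := by
  classical
  let p : ℕ → Prop := fun n => ∃ s : Finset (EuclideanSpace ℝ (Fin h)), s.card = n ∧
    (∀ c ∈ s, ‖c‖ ≤ K) ∧ ∀ c ∈ s, ∀ d ∈ s, c ≠ d → δ ≤ ‖c - d‖
  obtain ⟨M, hM⟩ := exists_nat_ge ((2 * (K / δ) + 1) ^ h)
  have hb : ∀ n, p n → n ≤ M := by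
    rintro n ⟨s, rfl, h1, h2⟩
    exact_mod_cast (card_separated_le hK hδ s h1 h2).trans hM
  have h0 : p 0 := ⟨∅, by simp⟩
  -- A separated set of maximal cardinality is a net.
  obtain ⟨s, hcard, hs, hsep⟩ : p (Nat.findGreatest p M) :=
    Nat.findGreatest_spec (Nat.zero_le M) h0
  refine ⟨s, hs, card_separated_le hK hδ s hs hsep, fun w hw => ?_⟩
  by_contra! hcon
  have hws : w ∉ s := fun hmem => by
    have := hcon w hmem
    simp at this
    linarith
  have hp : p (s.card + 1) := by
    refine ⟨insert w s, Finset.card_insert_of_notMem hws, ?_, ?_⟩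
    · intro c hc
      rcases Finset.mem_insert.1 hc with rfl | hc
      exacts [hw, hs c hc]
    · intro c hc d hd hcd
      rcases Finset.mem_insert.1 hc with rfl | hcs <;> rcases Finset.mem_insert.1 hd with rfl | hds
      · exact absurd rfl hcd
      · exact (hcon d hds).le
      · rw [norm_sub_rev]
        exact (hcon c hcs).le
      · exact hsep c hcs d hds hcd
  have := Nat.le_findGreatest (hb _ hp) hp
  omega

/-- The signed sum `Σ ε_i a_i`, with signs encoded by booleans. -/
def signedSum {m : ℕ} (a : Fin m → ℝ) (ε : Fin m → Bool) : ℝ :=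
  ∑ i, (if ε i then (1 : ℝ) else -1) * a i

/-- Sub-Gaussian bound for the moment generating function of a Rademacher sum. -/
lemma sum_exp_signed_le {m : ℕ} (a : Fin m → ℝ) {α : ℝ} (ha : ∀ i, |a i| ≤ α) (t : ℝ) :
    ∑ ε : Fin m → Bool, Real.exp (t * signedSum a ε) ≤
      2 ^ m * Real.exp (m * (t ^ 2 * α ^ 2 / 2)) := by
  have h1 : ∑ ε : Fin m → Bool, Real.exp (t * signedSum a ε) =
      ∏ i, ∑ b : Bool, Real.exp (t * ((if b then (1 : ℝ) else -1) * a i)) := by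
    rw [Fintype.prod_sum]
    refine Finset.sum_congr rfl fun ε _ => ?_
    rw [signedSum, Finset.mul_sum, Real.exp_sum]
  rw [h1, Real.exp_nat_mul, ← mul_pow]
  calc _ ≤ ∏ _i : Fin m, (2 * Real.exp (t ^ 2 * α ^ 2 / 2)) := by
        refine Finset.prod_le_prod (fun i _ => by positivity) fun i _ => ?_
        have h2 : ∑ b : Bool, Real.exp (t * ((if b then (1 : ℝ) else -1) * a i)) =
            2 * Real.cosh (t * a i) := by
          rw [Real.cosh_eq]
          simp
          ring
        rw [h2]
        have h3 := Real.cosh_le_exp_half_sq (t * a i)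
        have h4 : (t * a i) ^ 2 / 2 ≤ t ^ 2 * α ^ 2 / 2 := by
          have : a i ^ 2 ≤ α ^ 2 := sq_le_sq' (abs_le.1 (ha i)).1 (abs_le.1 (ha i)).2
          rw [mul_pow]
          gcongr
        have h5 := Real.exp_le_exp.2 h4
        linarith
    _ = _ := by simp

/-- Bounds every `|S_j|` at once, by a quantity that is easy to average over `ε`: the sum of
`exp (± Λ S_k)` over the family dominates `exp (Λ |S_j|)`, and `P` is a free parameter. -/
lemma abs_signed_le {ι : Type*} {m : ℕ} (N : Finset ι) (a : ι → Fin m → ℝ) {Λ P : ℝ} (hΛ : 0 < Λ)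
    (ε : Fin m → Bool) {j : ι} (hj : j ∈ N) :
    |signedSum (a j) ε| ≤ (1 / Λ) * (P - 1 + Real.exp (-P) *
      ∑ k ∈ N, (Real.exp (Λ * signedSum (a k) ε) + Real.exp (-Λ * signedSum (a k) ε))) := by
  set S := signedSum (a j) ε
  have h1 : Real.exp (Λ * |S|) ≤
      ∑ k ∈ N, (Real.exp (Λ * signedSum (a k) ε) + Real.exp (-Λ * signedSum (a k) ε)) := by
    refine le_trans ?_ (Finset.single_le_sum (f := fun k => Real.exp (Λ * signedSum (a k) ε) +
      Real.exp (-Λ * signedSum (a k) ε)) (fun k _ => by positivity) hj)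
    change _ ≤ Real.exp (Λ * S) + Real.exp (-Λ * S)
    rcases abs_cases S with ⟨h, _⟩ | ⟨h, _⟩ <;> rw [h]
    · linarith [Real.exp_pos (-Λ * S)]
    · rw [mul_neg, ← neg_mul]
      linarith [Real.exp_pos (Λ * S)]
  have h2 := Real.add_one_le_exp (Λ * |S| - P)
  have h3 : Real.exp (Λ * |S| - P) = Real.exp (-P) * Real.exp (Λ * |S|) := by
    rw [← Real.exp_add]
    ring_nf
  have h4 := mul_le_mul_of_nonneg_left h1 (Real.exp_pos (-P)).le
  rw [one_div, inv_mul_eq_div, le_div_iff₀ hΛ]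
  linarith

/-- empirical Rademacher complexity bound for a Lipschitz-parameterized
function class over the closed Euclidean ball of radius `K` in `ℝ^h`.
The empirical Rademacher complexity is formalized as
`2^{-m} Σ_{ε ∈ {±1}^m} sup_{‖w‖ ≤ K} |(1/m) Σ_i ε_i g(w, x_i)|`,
where signs are encoded by `ε : Fin m → Bool`. -/
theorem statement5 :
    ∃ c : ℝ, 0 < c ∧
      ∀ (h m : ℕ), 0 < h → 0 < m →
      ∀ (K L : ℝ), 0 < K → 0 < L →
      ∀ (X : Type) (x : Fin m → X)
        (g : EuclideanSpace ℝ (Fin h) → X → ℝ),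
      (∀ i : Fin m, ∀ w w' : EuclideanSpace ℝ (Fin h),
        ‖w‖ ≤ K → ‖w'‖ ≤ K → |g w (x i) - g w' (x i)| ≤ L * ‖w - w'‖) →
      ∀ α : ℝ,
        α = sSup {t : ℝ | ∃ w : EuclideanSpace ℝ (Fin h), ‖w‖ ≤ K ∧
              ∃ i : Fin m, t = |g w (x i)|} →
        BddAbove {t : ℝ | ∃ w : EuclideanSpace ℝ (Fin h), ‖w‖ ≤ K ∧
              ∃ i : Fin m, t = |g w (x i)|} →
        0 < α →
        Real.exp 1 * α * Real.sqrt h ≤ K * L * Real.sqrt m →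
        (1 / 2 ^ m : ℝ) *
            ∑ ε : Fin m → Bool,
              sSup {t : ℝ | ∃ w : EuclideanSpace ℝ (Fin h), ‖w‖ ≤ K ∧
                t = |(1 / m : ℝ) * ∑ i, (if ε i then (1 : ℝ) else -1) * g w (x i)|} ≤
          c * α * Real.sqrt (h * Real.log (K * L * Real.sqrt m / (α * Real.sqrt h))) /
            Real.sqrt m := by
  refine ⟨5, by norm_num, ?_⟩
  intro h m hh hm K L hK hL X x g hlip α hα hbdd hα0 hT0
  have hmR : (0 : ℝ) < m := by exact_mod_cast hm
  have hhR : (1 : ℝ) ≤ h := by exact_mod_cast hh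
  have hsm : 0 < Real.sqrt m := Real.sqrt_pos.2 hmR
  have hsh : 0 < Real.sqrt h := Real.sqrt_pos.2 (by linarith)
  have hsm2 : Real.sqrt m ^ 2 = m := Real.sq_sqrt hmR.le
  set T := K * L * Real.sqrt m / (α * Real.sqrt h) with hTdef
  have hTe : Real.exp 1 ≤ T := by
    rw [hTdef, le_div_iff₀ (by positivity)]
    linarith
  have hT27 : 2.7 ≤ T := by linarith [Real.exp_one_gt_d9]
  have hTpos : 0 < T := by linarith
  have hlog : 1 ≤ Real.log T := (Real.le_log_iff_exp_le hTpos).2 hTe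
  set s := Real.sqrt (h * Real.log T) with hsdef
  have hs2 : s ^ 2 = h * Real.log T := Real.sq_sqrt (by positivity)
  have hshs : Real.sqrt h ≤ s := Real.sqrt_le_sqrt (by nlinarith)
  have hspos : 0 < s := by linarith
  have hga : ∀ w : EuclideanSpace ℝ (Fin h), ‖w‖ ≤ K → ∀ i, |g w (x i)| ≤ α := by
    intro w hw i
    rw [hα]
    exact le_csSup hbdd ⟨w, hw, i, rfl⟩
  obtain ⟨N, hNK, hNcard, hNcov⟩ := exists_net (h := h) (δ := K / T) hK (by positivity)
  have hKT : K / (K / T) = T := by field_simp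
  rw [hKT] at hNcard
  have hLδ : L * (K / T) = α * Real.sqrt h / Real.sqrt m := by
    rw [hTdef]
    field_simp
  have hcard2 : 2 * (N.card : ℝ) ≤ Real.exp (3 * s ^ 2) := by
    have e1 : Real.exp (3 * s ^ 2) = (T ^ 3) ^ h := by
      rw [hs2, show 3 * (h * Real.log T) = h * (3 * Real.log T) by ring, Real.exp_nat_mul]
      congr 1
      rw [show (3 : ℝ) = ((3 : ℕ) : ℝ) by norm_num, Real.exp_nat_mul, Real.exp_log hTpos]
    have e2 : 2 * (2 * T + 1) ≤ T ^ 3 := by nlinarith [mul_nonneg hTpos.le hTpos.le]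
    calc 2 * (N.card : ℝ) ≤ 2 ^ h * (2 * T + 1) ^ h := by
          have : (2 : ℝ) ≤ 2 ^ h := by simpa using pow_le_pow_right₀ (one_le_two (α := ℝ)) hh
          gcongr
      _ = (2 * (2 * T + 1)) ^ h := (mul_pow _ _ _).symm
      _ ≤ (T ^ 3) ^ h := by gcongr
      _ = _ := e1.symm
  -- With this `Λ`, the sub-Gaussian exponent `m Λ² α² / 2` is `s² / 2`, so that `exp P` with
  -- `P = 3 s² + s² / 2` dominates the exponential moment summed over the net and both signs.
  set Λ := s / (α * Real.sqrt m) with hΛdef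
  have hΛ : 0 < Λ := by positivity
  have hΛ2 : (m : ℝ) * (Λ ^ 2 * α ^ 2 / 2) = s ^ 2 / 2 := by
    rw [hΛdef, div_pow, mul_pow, hsm2]
    field_simp
  set P := 3 * s ^ 2 + s ^ 2 / 2 with hP
  let a : EuclideanSpace ℝ (Fin h) → Fin m → ℝ := fun w i => g w (x i)
  let Q : (Fin m → Bool) → ℝ := fun ε => ∑ k ∈ N,
    (Real.exp (Λ * signedSum (a k) ε) + Real.exp (-Λ * signedSum (a k) ε))
  have hsup : ∀ ε : Fin m → Bool,
      sSup {t : ℝ | ∃ w : EuclideanSpace ℝ (Fin h), ‖w‖ ≤ K ∧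
        t = |(1 / m : ℝ) * ∑ i, (if ε i then (1 : ℝ) else -1) * g w (x i)|} ≤
      L * (K / T) + (1 / m : ℝ) * ((1 / Λ) * (P - 1 + Real.exp (-P) * Q ε)) := by
    intro ε
    refine csSup_le ⟨_, 0, by simpa using hK.le, rfl⟩ ?_
    rintro t ⟨w, hw, rfl⟩
    obtain ⟨c, hc, hwc⟩ := hNcov w hw
    have h1 : |signedSum (a c) ε| ≤ (1 / Λ) * (P - 1 + Real.exp (-P) * Q ε) :=
      abs_signed_le N a hΛ ε hc
    have h2 : |signedSum (a w) ε - signedSum (a c) ε| ≤ m * (L * (K / T)) := by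
      rw [signedSum, signedSum, ← Finset.sum_sub_distrib]
      refine (Finset.abs_sum_le_sum_abs _ _).trans ?_
      calc _ ≤ ∑ _i : Fin m, L * (K / T) := by
            refine Finset.sum_le_sum fun i _ => ?_
            rw [← mul_sub, abs_mul]
            have : |if ε i then (1 : ℝ) else -1| = 1 := by split_ifs <;> simp
            rw [this, one_mul]
            exact (hlip i w c hw (hNK c hc)).trans (by gcongr)
        _ = _ := by simp
    have h3 : |signedSum (a w) ε| ≤
        m * (L * (K / T)) + (1 / Λ) * (P - 1 + Real.exp (-P) * Q ε) := by
      have := abs_add_le (signedSum (a w) ε - signedSum (a c) ε) (signedSum (a c) ε)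
      rw [sub_add_cancel] at this
      linarith
    rw [abs_mul, abs_of_pos (by positivity : (0 : ℝ) < 1 / m)]
    calc _ ≤ (1 / m : ℝ) *
          (m * (L * (K / T)) + (1 / Λ) * (P - 1 + Real.exp (-P) * Q ε)) := by
          exact mul_le_mul_of_nonneg_left h3 (by positivity)
      _ = _ := by
          rw [mul_add, ← mul_assoc (1 / m : ℝ) (m : ℝ), one_div_mul_cancel hmR.ne', one_mul]
  have hQ : ∑ ε, Q ε ≤ 2 ^ m * Real.exp P := by
    simp only [Q]
    rw [Finset.sum_comm]
    calc _ ≤ ∑ _k ∈ N, 2 * (2 ^ m * Real.exp (s ^ 2 / 2)) := by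
          refine Finset.sum_le_sum fun k hk => ?_
          rw [Finset.sum_add_distrib]
          have h1 := sum_exp_signed_le (a k) (hga k (hNK k hk)) Λ
          have h2 := sum_exp_signed_le (a k) (hga k (hNK k hk)) (-Λ)
          rw [neg_sq, hΛ2] at h2
          rw [hΛ2] at h1
          linarith
      _ = 2 ^ m * ((2 * N.card) * Real.exp (s ^ 2 / 2)) := by
          rw [Finset.sum_const, nsmul_eq_mul]
          ring
      _ ≤ 2 ^ m * (Real.exp (3 * s ^ 2) * Real.exp (s ^ 2 / 2)) := by gcongr
      _ = _ := by rw [← Real.exp_add]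
  have h2m : (0 : ℝ) < 2 ^ m := by positivity
  have hQ2 : (1 / 2 ^ m : ℝ) * (Real.exp (-P) * ∑ ε, Q ε) ≤ 1 := by
    calc _ ≤ (1 / 2 ^ m : ℝ) * (Real.exp (-P) * (2 ^ m * Real.exp P)) := by gcongr
      _ = 1 := by
        rw [Real.exp_neg]
        have := Real.exp_pos P
        field_simp
  calc _ ≤ (1 / 2 ^ m : ℝ) * ∑ ε : Fin m → Bool,
        (L * (K / T) + (1 / m : ℝ) * ((1 / Λ) * (P - 1 + Real.exp (-P) * Q ε))) := by
        gcongr with ε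
        exact hsup ε
    _ = L * (K / T) + (1 / m : ℝ) * ((1 / Λ) * (P - 1 +
          (1 / 2 ^ m : ℝ) * (Real.exp (-P) * ∑ ε, Q ε))) := by
        simp only [Finset.sum_add_distrib, ← Finset.mul_sum, Finset.sum_const, Finset.card_univ,
          Fintype.card_fun, Fintype.card_bool, Fintype.card_fin, nsmul_eq_mul]
        push_cast
        field_simp
    _ ≤ L * (K / T) + (1 / m : ℝ) * ((1 / Λ) * (P - 1 + 1)) := by gcongr
    _ = (α * Real.sqrt h + 7 / 2 * (α * s)) / Real.sqrt m := by
        rw [hLδ, hΛdef, hP, add_div]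
        congr 1
        nth_rewrite 1 [← hsm2]
        field_simp
        ring
    _ ≤ 5 * α * s / Real.sqrt m := by
        gcongr
        nlinarith [mul_le_mul_of_nonneg_left hshs hα0.le, mul_pos hα0 hspos]
end
end

section
/- Let k, s, q be positive integers with s | k, s | q, and k ≤ q, and let w^{(1)}, …, w^{(k)} ∈ ℝ^k be orthonormal vectors (pairwise orthogonal, each of unit Euclidean norm). Let W ∈ ℝ^{(kq/s)×q} be the stacked circulant convolution matrix W = [Circ(w^{(1)}); …; Circ(w^{(k)})]. Then WᵀW = (k/s)·I_q, and consequently the spectral norm satisfies ‖W‖₂ = √(k/s). -/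
/-!
Each entry of `WᵀW` is a sum over the row positions `h` of `∑ j, w j t * w j t'`, where `t`, `t'` are
the offsets of the two columns in row `h`. The `k × k` matrix of filters is orthogonal, so its columns
are orthonormal as well (`column_orthonormal`) and the inner sum is `1` if `t = t' < k` and `0`
otherwise. Equal offsets force equal columns (`offset_inj`), so `WᵀW` is diagonal, and each diagonal
entry counts the positions `h` whose window contains the column: `k / s` of them (`card_rows`).
The norm follows from the C⋆-identity (`spec_of_gram`).
-/

noncomputable section
open Matrix

/-- Spectral norm of a real matrix (operator norm w.r.t. Euclidean norms). -/
def spec {n m : ℕ} (A : Matrix (Fin n) (Fin m) ℝ) : ℝ :=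
  ‖LinearMap.toContinuousLinearMap (Matrix.toEuclideanLin A)‖

/-- Circulant convolution matrix `Circ(w) ∈ ℝ^{(q/s) × q}` (0-indexed): its
`(h, i)` entry is `w t` where `t = (i − h·s) mod q`, provided `t < k`, and `0` otherwise. -/
def circ (k s q : ℕ) (w : Fin k → ℝ) : Matrix (Fin (q / s)) (Fin q) ℝ :=
  fun h i =>
    if ht : ((i : ℕ) + q - (h : ℕ) * s) % q < k then w ⟨((i : ℕ) + q - (h : ℕ) * s) % q, ht⟩
    else 0

/-- Vertical stack `[Circ(w⁽¹⁾); …; Circ(w⁽ⁿ⁾)] ∈ ℝ^{(n·q/s) × q}`: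
row `r` lies in block `r / (q/s)` and is row `r % (q/s)` of that block. -/
def stackedCirc (k s q n : ℕ) (w : Fin n → Fin k → ℝ) :
    Matrix (Fin (n * (q / s))) (Fin q) ℝ :=
  fun r i =>
    if hqs : 0 < q / s then
      circ k s q (w ⟨(r : ℕ) / (q / s), (Nat.div_lt_iff_lt_mul hqs).mpr r.isLt⟩)
        ⟨(r : ℕ) % (q / s), Nat.mod_lt _ hqs⟩ i
    else 0

/-- A square real matrix with orthonormal rows has orthonormal columns. -/
theorem column_orthonormal {k : ℕ} (w : Fin k → Fin k → ℝ)
    (hnorm : ∀ j, ∑ t, w j t ^ 2 = 1)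
    (horth : ∀ j j', j ≠ j' → ∑ t, w j t * w j' t = 0) (t t' : Fin k) :
    ∑ j, w j t * w j t' = if t = t' then 1 else 0 := by
  have hrow : Matrix.of w * (Matrix.of w)ᵀ = 1 := by
    ext j j'
    rw [Matrix.mul_apply, Matrix.one_apply]
    split_ifs with h
    · subst h
      simpa [pow_two] using hnorm j
    · simpa using horth j j' h
  have hcol : ((Matrix.of w)ᵀ * Matrix.of w) t t' = (1 : Matrix (Fin k) (Fin k) ℝ) t t' := by
    rw [mul_eq_one_comm.mp hrow]
  simpa [Matrix.mul_apply, Matrix.one_apply] using hcol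

/-- A fixed row of a circulant reads distinct columns at distinct offsets. -/
theorem offset_inj {q i i' a : ℕ} (hi : i < q) (hi' : i' < q) (ha : a ≤ q)
    (h : (i + q - a) % q = (i' + q - a) % q) : i = i' := by
  have h1 : (i + (q - a)) ≡ (i' + (q - a)) [MOD q] := by
    rw [Nat.ModEq, ← Nat.add_sub_assoc ha, ← Nat.add_sub_assoc ha]
    exact h
  exact Nat.ModEq.eq_of_lt_of_lt (Nat.ModEq.add_right_cancel' _ h1) hi hi'

/-- The reflection `h ↦ (b - h) mod m` is an involution of `{0, …, m - 1}`; the summand `m` keeps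
the subtraction from truncating. -/
theorem reflect_reflect {m b h : ℕ} (hb : b < m) (hh : h < m) :
    (b + m - (b + m - h) % m) % m = h := by
  rcases le_or_gt h b with hle | hlt
  · have : (b + m - h) % m = b - h := by
      rw [show b + m - h = b - h + m by omega, Nat.add_mod_right, Nat.mod_eq_of_lt (by omega)]
    rw [this, show b + m - (b - h) = h + m by omega, Nat.add_mod_right, Nat.mod_eq_of_lt hh]
  · have : (b + m - h) % m = b + m - h := Nat.mod_eq_of_lt (by omega)
    rw [this, show b + m - (b + m - h) = h by omega, Nat.mod_eq_of_lt hh]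

/-- Every column meets the support window `{0, …, s * a - 1}` of exactly `a` rows of a circulant of
width `s * m` and stride `s`. Writing the column as `s * b + r` with `r < s`, the offset in row `h`
is `s * ((b - h) mod m) + r`, and `h ↦ (b - h) mod m` is an involution of `{0, …, m - 1}`. -/
theorem card_rows {s m a i : ℕ} (hs : 0 < s) (ham : a ≤ m) (hi : i < s * m) :
    (Finset.univ.filter fun h : Fin m => (i + s * m - h * s) % (s * m) < s * a).card = a := by
  have hb : i / s < m := Nat.div_lt_of_lt_mul hi
  have hr : i % s < s := Nat.mod_lt _ hs
  have hm : 0 < m := (Nat.zero_le _).trans_lt hb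
  have key : ∀ h : Fin m,
      (i + s * m - h * s) % (s * m) < s * a ↔ (i / s + m - h) % m < a := by
    intro h
    have e : i + s * m - h * s = i % s + s * (i / s + m - h) := by
      have h1 := Nat.mod_add_div i s
      have h2 : s * (i / s + m - h) = s * (i / s) + s * m - s * h := by
        rw [Nat.mul_sub, Nat.mul_add]
      have h3 : s * (h : ℕ) ≤ s * m := Nat.mul_le_mul_left _ h.2.le
      rw [h2, Nat.mul_comm (h : ℕ) s]
      omega
    have hd : (i % s + s * (i / s + m - h)) / s = i / s + m - h := by
      rw [Nat.add_mul_div_left _ _ hs, Nat.div_eq_of_lt hr, zero_add]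
    rw [e, ← hd, ← Nat.mod_mul_right_div_self, Nat.div_lt_iff_lt_mul hs, Nat.mul_comm a s, hd]
  rw [Finset.filter_congr fun h _ => key h]
  conv_rhs => rw [← Finset.card_range a]
  refine Finset.card_nbij' (fun h : Fin m => (i / s + m - h) % m)
    (fun c => ⟨(i / s + m - c) % m, Nat.mod_lt _ hm⟩) ?_ ?_ ?_ ?_
  · intro h hh
    simpa using hh
  · intro c hc
    have hc' : c < a := by simpa using hc
    simpa [reflect_reflect hb (hc'.trans_le ham)] using hc'
  · intro h _
    exact Fin.ext (reflect_reflect hb h.2)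
  · intro c hc
    have hc' : c < a := by simpa using hc
    exact reflect_reflect hb (hc'.trans_le ham)

theorem gram_eq_sum_blocks (k s q n : ℕ) (hqs : 0 < q / s) (w : Fin n → Fin k → ℝ)
    (i i' : Fin q) :
    ((stackedCirc k s q n w)ᵀ * stackedCirc k s q n w) i i' =
      ∑ h, ∑ j, circ k s q (w j) h i * circ k s q (w j) h i' := by
  rw [Matrix.mul_apply, Finset.sum_comm, ← Fintype.sum_prod_type',
    ← finProdFinEquiv.symm.sum_comp]
  -- `finProdFinEquiv.symm r` is `(r / (q / s), r % (q / s))`, the row encoding of `stackedCirc`.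
  refine Finset.sum_congr rfl fun r _ => ?_
  simp only [Matrix.transpose_apply, stackedCirc, dif_pos hqs]
  rfl

theorem gram (k s q : ℕ) (hs : 0 < s) (hq : 0 < q)
    (hsk : s ∣ k) (hsq : s ∣ q) (hkq : k ≤ q)
    (w : Fin k → Fin k → ℝ)
    (hnorm : ∀ j, ∑ t, w j t ^ 2 = 1)
    (horth : ∀ j j', j ≠ j' → ∑ t, w j t * w j' t = 0) :
    (stackedCirc k s q k w)ᵀ * stackedCirc k s q k w =
      ((k : ℝ) / (s : ℝ)) • (1 : Matrix (Fin q) (Fin q) ℝ) := by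
  ext i i'
  rw [gram_eq_sum_blocks k s q k (Nat.div_pos (Nat.le_of_dvd hq hsq) hs)]
  have hblock : ∀ h : Fin (q / s), ∑ j, circ k s q (w j) h i * circ k s q (w j) h i' =
      if i = i' ∧ ((i : ℕ) + q - h * s) % q < k then 1 else 0 := by
    intro h
    have hle : (h : ℕ) * s ≤ q :=
      (Nat.mul_le_mul_right s h.2.le).trans (Nat.div_mul_le_self q s)
    simp only [circ]
    by_cases h1 : ((i : ℕ) + q - h * s) % q < k
    · by_cases h2 : ((i' : ℕ) + q - h * s) % q < k
      · simp only [dif_pos h1, dif_pos h2, column_orthonormal w hnorm horth, Fin.mk.injEq]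
        refine if_congr ⟨fun e => ⟨Fin.ext (offset_inj i.2 i'.2 hle e), h1⟩, ?_⟩ rfl rfl
        rintro ⟨rfl, -⟩
        rfl
      · have : i ≠ i' := by
          rintro rfl
          exact h2 h1
        simp [h2, this]
    · simp [h1]
  simp only [hblock, Matrix.smul_apply, Matrix.one_apply, smul_eq_mul]
  by_cases hii : i = i'
  · obtain ⟨a, rfl⟩ := hsk
    obtain ⟨m, rfl⟩ := hsq
    have hcard : (Finset.univ.filter fun h : Fin (s * m / s) =>
        ((i : ℕ) + s * m - h * s) % (s * m) < s * a).card = a := by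
      rw! [Nat.mul_div_cancel_left m hs]
      exact card_rows hs (Nat.le_of_mul_le_mul_left hkq hs) i.2
    have hs' : (s : ℝ) ≠ 0 := by positivity
    simp only [hii, true_and, if_true, mul_one, Finset.sum_boole]
    rw [hii] at hcard
    rw [hcard]
    push_cast
    field_simp
  · simp [hii]

open scoped Matrix.Norms.L2Operator in
/-- The C⋆-identity `‖Aᵀ A‖ = ‖A‖ ^ 2` turns a scalar Gram matrix into the value of the norm. -/
theorem spec_of_gram {n m : ℕ} (hm : 0 < m) (A : Matrix (Fin n) (Fin m) ℝ) {c : ℝ} (hc : 0 ≤ c)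
    (h : Aᵀ * A = c • (1 : Matrix (Fin m) (Fin m) ℝ)) : spec A = Real.sqrt c := by
  have : Nonempty (Fin m) := ⟨⟨0, hm⟩⟩
  have hspec : spec A = ‖A‖ := rfl
  have h1 := Matrix.l2_opNorm_conjTranspose_mul_self A
  rw [Matrix.conjTranspose_eq_transpose_of_trivial, h, norm_smul, CStarRing.norm_one, mul_one,
    Real.norm_of_nonneg hc] at h1
  rw [hspec, h1, Real.sqrt_mul_self (norm_nonneg A)]

/-- for `k` orthonormal filters in `ℝ^k`, the stacked circulant
matrix `W` satisfies `WᵀW = (k/s)·I_q`, and consequently `‖W‖₂ = √(k/s)`. -/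
theorem statement7 (k s q : ℕ) (hk : 0 < k) (hs : 0 < s) (hq : 0 < q)
    (hsk : s ∣ k) (hsq : s ∣ q) (hkq : k ≤ q)
    (w : Fin k → Fin k → ℝ)
    (hnorm : ∀ j, ∑ t, w j t ^ 2 = 1)
    (horth : ∀ j j', j ≠ j' → ∑ t, w j t * w j' t = 0) :
    (stackedCirc k s q k w)ᵀ * stackedCirc k s q k w =
      ((k : ℝ) / (s : ℝ)) • (1 : Matrix (Fin q) (Fin q) ℝ) ∧
    spec (stackedCirc k s q k w) = Real.sqrt ((k : ℝ) / (s : ℝ)) := by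
  have hg := gram k s q hs hq hsk hsq hkq w hnorm horth
  exact ⟨hg, spec_of_gram hq _ (by positivity) hg⟩
end
end

section
/- Let k, s, q, n be positive integers with s | k, s | q, k ≤ q, and n ≤ k, and let w^{(1)}, …, w^{(n)} ∈ ℝ^k be pairwise orthogonal vectors each of unit Euclidean norm. Let W ∈ ℝ^{(nq/s)×q} be the stacked circulant convolution matrix W = [Circ(w^{(1)}); …; Circ(w^{(n)})]. Then the spectral norm satisfies ‖W‖₂ ≤ √(k/s). -/
/-!
Write `F m = x (m % q)` for the `q`-periodic extension of `x`. Row `h` of block `j` applied to `x`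
is the inner product of `w j` with the window `t ↦ F (h * s + t)`, `t < k`. The `w j` being
orthonormal, Bessel's inequality bounds the sum over `j` of the squares of these products by the
squared norm of the window. Since `s` divides `k`, the windows
`h * s, …, h * s + k - 1`, `h < q / s`, together cover each residue mod `q` exactly `k / s` times,
so the squared norms of the windows sum to `(k / s) * ‖x‖ ^ 2`.
-/


noncomputable section
open Matrix

/-- The sum of a `q`-periodic function over `q` consecutive integers does not depend on the
starting point. -/
lemma sum_range_shift {q : ℕ} {P : ℕ → ℝ} (hP : ∀ m, P (m + q) = P m) (c : ℕ) :
    ∑ m ∈ Finset.range q, P (c + m) = ∑ m ∈ Finset.range q, P m := by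
  induction c with
  | zero => simp
  | succ c ih =>
    rw [← ih]
    have h1 := Finset.sum_range_succ (fun m => P (c + m)) q
    have h2 := Finset.sum_range_succ' (fun m => P (c + m)) q
    have h3 : ∑ m ∈ Finset.range q, P (c + 1 + m) = ∑ m ∈ Finset.range q, P (c + (m + 1)) :=
      Finset.sum_congr rfl fun m _ => by congr 1; ring
    have h4 := hP c
    simp only [add_zero] at h2
    linarith

lemma sum_range_mul_blocks (a s : ℕ) (P : ℕ → ℝ) :
    ∑ m ∈ Finset.range (a * s), P m =
      ∑ h ∈ Finset.range a, ∑ b ∈ Finset.range s, P (h * s + b) := by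
  induction a with
  | zero => simp
  | succ a ih => rw [Nat.succ_mul, Finset.sum_range_add, ih, Finset.sum_range_succ]

/-- Summing a periodic function over all the windows of length `k = a * s` at the multiples of `s`
counts each residue mod `q = Q * s` exactly `a` times. -/
lemma sum_windows (a s Q : ℕ) {P : ℕ → ℝ} (hP : ∀ m, P (m + Q * s) = P m) :
    ∑ h ∈ Finset.range Q, ∑ t ∈ Finset.range (a * s), P (h * s + t) =
      a * ∑ m ∈ Finset.range (Q * s), P m := by
  simp_rw [sum_range_mul_blocks a s]
  rw [Finset.sum_comm]
  have key : ∀ c ∈ Finset.range a,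
      ∑ h ∈ Finset.range Q, ∑ b ∈ Finset.range s, P (h * s + (c * s + b)) =
        ∑ m ∈ Finset.range (Q * s), P m := by
    intro c _
    rw [← sum_range_shift hP (c * s), sum_range_mul_blocks Q s (fun m => P (c * s + m))]
    refine Finset.sum_congr rfl fun h _ => Finset.sum_congr rfl fun b _ => ?_
    congr 1; ring
  rw [Finset.sum_congr rfl key]
  simp

/-- A row of `Circ(w)` applied to the restriction of a periodic `F` is the inner product of `w`
with a window of `F`. -/
lemma circ_row {k s q : ℕ} (hkq : k ≤ q) (w : Fin k → ℝ) (h : Fin (q / s)) {F : ℕ → ℝ}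
    (hF : ∀ m, F (m + q) = F m) :
    ∑ i : Fin q, circ k s q w h i * F i = ∑ t : Fin k, w t * F (h * s + t) := by
  have hle : (h : ℕ) * s ≤ q :=
    (Nat.mul_le_mul_right s h.isLt.le).trans (Nat.div_mul_le_self q s)
  let g : ℕ → ℝ := fun t => if ht : t < k then w ⟨t, ht⟩ else 0
  let P : ℕ → ℝ := fun m => g ((m + q - h * s) % q) * F m
  have hP : ∀ m, P (m + q) = P m := by
    intro m
    have e : m + q + q - h * s = (m + q - h * s) + q := by omega
    simp only [P, hF, e, Nat.add_mod_right]
  calc ∑ i : Fin q, circ k s q w h i * F i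
      = ∑ m ∈ Finset.range q, P m := (Finset.sum_range P).symm
    _ = ∑ m ∈ Finset.range q, P (h * s + m) := (sum_range_shift hP _).symm
    _ = ∑ m ∈ Finset.range q, g m * F (h * s + m) := by
        refine Finset.sum_congr rfl fun m hm => ?_
        have e : h * s + m + q - h * s = m + q := by omega
        simp only [P, e, Nat.add_mod_right, Nat.mod_eq_of_lt (Finset.mem_range.1 hm)]
    _ = ∑ m ∈ Finset.range k, g m * F (h * s + m) := by
        symm
        refine Finset.sum_subset (Finset.range_mono hkq) fun m _ hm => ?_
        simp [g, show ¬ m < k by simpa using hm]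
    _ = ∑ t : Fin k, w t * F (h * s + t) := by
        rw [Finset.sum_range]
        simp [g]

lemma bessel_fin {n k : ℕ} (w : Fin n → Fin k → ℝ)
    (hnorm : ∀ j, ∑ t, w j t ^ 2 = 1)
    (horth : ∀ j j', j ≠ j' → ∑ t, w j t * w j' t = 0) (y : Fin k → ℝ) :
    ∑ j, (∑ t, w j t * y t) ^ 2 ≤ ∑ t, y t ^ 2 := by
  have ho : Orthonormal ℝ (fun j => WithLp.toLp 2 (w j) : Fin n → EuclideanSpace ℝ (Fin k)) := by
    constructor
    · intro j
      rw [EuclideanSpace.norm_eq]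
      simp [hnorm]
    · intro j j' hj
      simpa [PiLp.inner_apply, mul_comm] using horth j j' hj
  have := ho.sum_inner_products_le (WithLp.toLp 2 y) (s := Finset.univ)
  rw [EuclideanSpace.real_norm_sq_eq] at this
  simpa [PiLp.inner_apply, mul_comm] using this

/-- for `n ≤ k` pairwise-orthogonal unit-norm filters in `ℝ^k`, the
stacked circulant matrix satisfies `‖W‖₂ ≤ √(k/s)`. -/
theorem statement8 (k s q n : ℕ) (hk : 0 < k) (hs : 0 < s) (hq : 0 < q) (hn : 0 < n)
    (hsk : s ∣ k) (hsq : s ∣ q) (hkq : k ≤ q) (hnk : n ≤ k)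
    (w : Fin n → Fin k → ℝ)
    (hnorm : ∀ j, ∑ t, w j t ^ 2 = 1)
    (horth : ∀ j j', j ≠ j' → ∑ t, w j t * w j' t = 0) :
    spec (stackedCirc k s q n w) ≤ Real.sqrt ((k : ℝ) / (s : ℝ)) := by
  obtain ⟨a, rfl⟩ := hsk
  have hQ : 0 < q / s := Nat.div_pos (Nat.le_of_dvd hq hsq) hs
  have hQs : q / s * s = q := Nat.div_mul_cancel hsq
  have hs' : (s : ℝ) ≠ 0 := by positivity
  have ha : ((s * a : ℕ) : ℝ) / s = a := by push_cast; field_simp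
  rw [ha]
  refine ContinuousLinearMap.opNorm_le_bound _ (Real.sqrt_nonneg _) fun x => ?_
  refine (sq_le_sq₀ (norm_nonneg _) (by positivity)).1 ?_
  rw [mul_pow, Real.sq_sqrt (Nat.cast_nonneg a), EuclideanSpace.real_norm_sq_eq,
    EuclideanSpace.real_norm_sq_eq]
  let F : ℕ → ℝ := fun m => x ⟨m % q, Nat.mod_lt _ hq⟩
  have hF : ∀ m, F (m + q) = F m := fun m => by simp [F]
  have hFx : ∀ i : Fin q, F i = x i := fun i => by simp [F, Nat.mod_eq_of_lt i.isLt]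
  have hrow : ∀ r : Fin (n * (q / s)),
      Matrix.toEuclideanLin (stackedCirc (s * a) s q n w) x r =
        ∑ t, w r.divNat t * F ((r.modNat : ℕ) * s + t) := by
    intro r
    rw [← circ_row hkq (w r.divNat) r.modNat hF]
    simp only [Matrix.toLpLin_apply, Matrix.mulVec, dotProduct, stackedCirc, hQ, hFx, dif_pos]
    rfl
  calc ∑ r, (Matrix.toEuclideanLin (stackedCirc (s * a) s q n w) x r) ^ 2
      = ∑ p : Fin n × Fin (q / s), (∑ t, w p.1 t * F ((p.2 : ℕ) * s + t)) ^ 2 :=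
        Fintype.sum_equiv finProdFinEquiv.symm _ _ fun r => by rw [hrow r]; rfl
    _ = ∑ h : Fin (q / s), ∑ j, (∑ t, w j t * F ((h : ℕ) * s + t)) ^ 2 :=
        Fintype.sum_prod_type_right _
    _ ≤ ∑ h : Fin (q / s), ∑ t : Fin (s * a), F ((h : ℕ) * s + t) ^ 2 :=
        Finset.sum_le_sum fun h _ => bessel_fin w hnorm horth _
    _ = ∑ h ∈ Finset.range (q / s), ∑ t ∈ Finset.range (a * s), F (h * s + t) ^ 2 := by
        simp_rw [mul_comm a s, Finset.sum_range]
    _ = a * ∑ m ∈ Finset.range (q / s * s), F m ^ 2 :=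
        sum_windows a s (q / s) (P := fun m => F m ^ 2) fun m => by rw [hQs, hF]
    _ = a * ∑ i, x i ^ 2 := by
        rw [hQs, Finset.sum_range]
        simp_rw [hFx]
end
end
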